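/- Fix an integer j ≥ 1. In the quotient ℂ-vector space P/(z^j·O_U^∞ + z^{−j}·O_V^∞), the images of the monomials z^l u^i with i ≥ 0 and k·i − j + 1 ≤ l ≤ j − 1 form a ℂ-basis; in particular this quotient is finite dimensional of dimension Σ_{i ≥ 0} max(0, 2j − 1 − k·i) (a finite sum, since the summand vanishes for k·i > 2j − 2). (This quotient computes Ext¹(O(j), O(−j)) on the formal neighborhood of the zero section, which is thus finite dimensional.) -/

import Mathlib

set_option synthInstance.maxHeartbeats 1000000
set_option maxHeartbeats 1000000

noncomputable section

/-- The ring of Laurent polynomials `ℂ[z,z⁻¹]`. -/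
abbrev Lz : Type := LaurentPolynomial ℂ

/-- The ring `P = ℂ[z,z⁻¹][[u]]` of formal power series in `u` with Laurent
polynomial coefficients. -/
abbrev Pz : Type := PowerSeries Lz

/-- The monomial `z^l u^i` as an element of `P`. -/
def mon (l : ℤ) (i : ℕ) : Pz := PowerSeries.monomial i (LaurentPolynomial.T l)

/-- The coefficient of `z^l` in a Laurent polynomial, as a `ℂ`-linear map. -/
def coeffL (l : ℤ) : Lz →ₗ[ℂ] ℂ :=
  (Finsupp.lapply l).comp (AddMonoidAlgebra.coeffLinearEquiv ℂ).toLinearMap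

/-- The coefficient of `z^l u^i` in an element of `P`, as a `ℂ`-linear map. -/
def coeffP (l : ℤ) (i : ℕ) : Pz →ₗ[ℂ] ℂ :=
  (coeffL l).comp ((PowerSeries.coeff i).restrictScalars ℂ)

/-- `O_U^∞ ⊆ P`: elements whose `u^i`-coefficient, for every `i`, is supported in
`z`-degrees `≥ 0`. -/
def OUinf : Submodule ℂ Pz where
  carrier := {f | ∀ (i : ℕ) (l : ℤ), l < 0 → coeffP l i f = 0}
  add_mem' := by
    intro f g hf hg i l hl
    simp only [Set.mem_setOf_eq] at *
    rw [map_add, hf i l hl, hg i l hl, add_zero]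
  zero_mem' := by intro i l _; simp
  smul_mem' := by
    intro c f hf i l hl
    simp only [Set.mem_setOf_eq] at *
    rw [map_smul, hf i l hl, smul_zero]

/-- `O_V^∞ ⊆ P`: elements whose `u^i`-coefficient, for every `i`, is supported in
`z`-degrees `≤ k·i`. -/
def OVinf (k : ℕ) : Submodule ℂ Pz where
  carrier := {f | ∀ (i : ℕ) (l : ℤ), (k : ℤ) * i < l → coeffP l i f = 0}
  add_mem' := by
    intro f g hf hg i l hl
    simp only [Set.mem_setOf_eq] at *
    rw [map_add, hf i l hl, hg i l hl, add_zero]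
  zero_mem' := by intro i l _; simp
  smul_mem' := by
    intro c f hf i l hl
    simp only [Set.mem_setOf_eq] at *
    rw [map_smul, hf i l hl, smul_zero]

/-- The submodule `a·S` obtained from a submodule `S ⊆ P` by multiplying by `a`. -/
def msmulP (a : Pz) (S : Submodule ℂ Pz) : Submodule ℂ Pz :=
  Submodule.map (LinearMap.mulLeft ℂ a) S

/-!
Membership in `z^m·O_U^∞ + z^{-n}·O_V^∞` is decided one monomial `z^l u^i` at a time: the first
summand consists of the series supported in `l ≥ m`, the second of those supported in `l ≤ k·i - n`,
and splitting a series at `z`-degree `m` shows that the sum consists of the series without terms in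
the gap `k·i - n < l < m`. So reading off the coefficients in the gap identifies the quotient with
the functions on the gap, provided the latter is finite. For `k ≥ 1` it is, being a triangle in the
`(l, i)`-plane, and the monomials in the gap go to the standard basis.
-/

section QuotientBasis

variable {ι R M : Type*} [Finite ι] [DecidableEq ι]

lemma surjective_of_map_eq_single [Semiring R] [AddCommMonoid M] [Module R M] {φ : M →ₗ[R] ι → R}
    {v : ι → M} (hv : ∀ i, φ (v i) = Pi.single i 1) : Function.Surjective φ := by
  have := Fintype.ofFinite ι
  have h_right_inv : φ ∘ₗ Fintype.linearCombination R v = LinearMap.id :=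
    (Pi.basisFun R ι).ext fun i => by simp [hv]
  exact fun c => ⟨Fintype.linearCombination R v c, LinearMap.congr_fun h_right_inv c⟩

variable [Ring R] [AddCommGroup M] [Module R M]

/-- The basis of `M ⧸ W` dual to a coordinate map `φ : M → R^ι` with kernel `W`; the lifts `v` of
the standard basis along `φ` represent its members. -/
def quotientBasis {φ : M →ₗ[R] ι → R} {v : ι → M} (hv : ∀ i, φ (v i) = Pi.single i 1)
    {W : Submodule R M} (hW : LinearMap.ker φ = W) : Module.Basis ι R (M ⧸ W) :=
  .ofEquivFun <| (Submodule.quotEquivOfEq W _ hW.symm).trans <|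
    φ.quotKerEquivOfSurjective (surjective_of_map_eq_single hv)

lemma quotientBasis_apply {φ : M →ₗ[R] ι → R} {v : ι → M} (hv : ∀ i, φ (v i) = Pi.single i 1)
    {W : Submodule R M} (hW : LinearMap.ker φ = W) (i : ι) :
    quotientBasis hv hW i = Submodule.Quotient.mk (v i) := by
  rw [quotientBasis, Module.Basis.coe_ofEquivFun, LinearEquiv.symm_apply_eq]
  exact (hv i).symm

end QuotientBasis

lemma coeffP_apply (l : ℤ) (i : ℕ) (f : Pz) :
    coeffP l i f = AddMonoidAlgebra.coeff (PowerSeries.coeff i f) l := rfl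

lemma coeffP_mon (a l : ℤ) (b i : ℕ) : coeffP l i (mon a b) = if (l, i) = (a, b) then 1 else 0 := by
  rw [coeffP_apply, mon, PowerSeries.coeff_monomial]
  by_cases h : i = b
  · rw [if_pos h, LaurentPolynomial.T, AddMonoidAlgebra.coeff_single, Finsupp.single_apply]
    simp only [Prod.mk.injEq, h, and_true, eq_comm]
  · simp [h]

lemma coeffP_mon_mul (a l : ℤ) (i : ℕ) (f : Pz) :
    coeffP l i (mon a 0 * f) = coeffP (l - a) i f := by
  rw [coeffP_apply, coeffP_apply, mon, PowerSeries.monomial_zero_eq_C_apply,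
    PowerSeries.coeff_C_mul, LaurentPolynomial.T, AddMonoidAlgebra.coeff_single_mul_apply,
    one_mul, neg_add_eq_sub]

lemma mon_mul_mon (a b : ℤ) (i j : ℕ) : mon a i * mon b j = mon (a + b) (i + j) := by
  rw [mon, mon, mon, PowerSeries.monomial_mul_monomial, LaurentPolynomial.T_add]

lemma mon_zero_zero : mon 0 0 = 1 := by
  rw [mon, LaurentPolynomial.T_zero, PowerSeries.monomial_zero_eq_C_apply, map_one]

/-- The part of `f` in `z`-degrees `≥ m`. -/
def upperPart (m : ℤ) (f : Pz) : Pz :=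
  .mk fun i => .ofCoeff ((AddMonoidAlgebra.coeff (PowerSeries.coeff i f)).filter (m ≤ ·))

lemma coeffP_upperPart (m l : ℤ) (i : ℕ) (f : Pz) :
    coeffP l i (upperPart m f) = if m ≤ l then coeffP l i f else 0 := by
  rw [coeffP_apply, coeffP_apply, upperPart, PowerSeries.coeff_mk,
    AddMonoidAlgebra.coeff_ofCoeff, Finsupp.filter_apply]

lemma mem_msmulP_mon {a : ℤ} {T : Submodule ℂ Pz} {f : Pz} :
    f ∈ msmulP (mon a 0) T ↔ mon (-a) 0 * f ∈ T := by
  constructor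
  · rintro ⟨g, hg, rfl⟩
    rwa [LinearMap.mulLeft_apply, ← mul_assoc, mon_mul_mon, neg_add_cancel, mon_zero_zero, one_mul]
  · refine fun hf => ⟨_, hf, ?_⟩
    rw [LinearMap.mulLeft_apply, ← mul_assoc, mon_mul_mon, add_neg_cancel, mon_zero_zero, one_mul]

lemma mem_msmulP_mon_OUinf {a : ℤ} {f : Pz} :
    f ∈ msmulP (mon a 0) OUinf ↔ ∀ (i : ℕ) (l : ℤ), l < a → coeffP l i f = 0 := by
  rw [mem_msmulP_mon]
  refine forall_congr' fun i => (Equiv.addRight a).forall_congr fun l => ?_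
  rw [coeffP_mon_mul, sub_neg_eq_add, Equiv.coe_addRight, add_lt_iff_neg_right]

lemma mem_msmulP_mon_OVinf {k : ℕ} {a : ℤ} {f : Pz} :
    f ∈ msmulP (mon a 0) (OVinf k) ↔
      ∀ (i : ℕ) (l : ℤ), (k : ℤ) * i + a < l → coeffP l i f = 0 := by
  rw [mem_msmulP_mon]
  refine forall_congr' fun i => (Equiv.addRight a).forall_congr fun l => ?_
  rw [coeffP_mon_mul, sub_neg_eq_add, Equiv.coe_addRight, add_lt_add_iff_right]

/-- The submodule `z^m·O_U^∞ + z^{-n}·O_V^∞` of `P`, by which one divides to compute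
`Ext¹(O(m), O(-n))` on `Ẑ_k`. -/
def coboundaries (k : ℕ) (m n : ℤ) : Submodule ℂ Pz :=
  msmulP (mon m 0) OUinf ⊔ msmulP (mon (-n) 0) (OVinf k)

/-- The exponents `(l, i)` of the monomials `z^l u^i` that lie strictly between the supports of
`z^{-n}·O_V^∞` and `z^m·O_U^∞`. -/
def gap (k : ℕ) (m n : ℤ) : Set (ℤ × ℕ) :=
  {q | (k : ℤ) * q.2 - n + 1 ≤ q.1 ∧ q.1 ≤ m - 1}

lemma mem_coboundaries {k : ℕ} {m n : ℤ} {f : Pz} :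
    f ∈ coboundaries k m n ↔ ∀ q ∈ gap k m n, coeffP q.1 q.2 f = 0 := by
  rw [coboundaries, Submodule.mem_sup]
  constructor
  · rintro ⟨g, hg, h, hh, rfl⟩ ⟨l, i⟩ ⟨h_lower, h_upper⟩
    rw [map_add, mem_msmulP_mon_OUinf.1 hg i l (by linarith),
      mem_msmulP_mon_OVinf.1 hh i l (by linarith), add_zero]
  · refine fun hf => ⟨upperPart m f, mem_msmulP_mon_OUinf.2 fun i l hl => ?_,
      f - upperPart m f, mem_msmulP_mon_OVinf.2 fun i l hl => ?_, add_sub_cancel _ _⟩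
    · rw [coeffP_upperPart, if_neg hl.not_ge]
    · rw [map_sub, coeffP_upperPart]
      split_ifs with h
      · exact sub_self _
      · rw [hf (l, i) ⟨by linarith, by linarith⟩, sub_zero]

section Gap

variable {k : ℕ} {m n : ℤ}

lemma snd_lt_of_mem_gap (hk : 1 ≤ k) {N : ℕ} (hN : m + n ≤ N) {q : ℤ × ℕ} (hq : q ∈ gap k m n) :
    q.2 < N := by
  obtain ⟨h_lower, h_upper⟩ := hq
  have h_le : (q.2 : ℤ) ≤ k * q.2 := mod_cast Nat.le_mul_of_pos_left q.2 hk
  lia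

/-- The gap, enumerated column by column: the power of `u` first. -/
def gapEquiv (hk : 1 ≤ k) {N : ℕ} (hN : m + n ≤ N) :
    gap k m n ≃ (Finset.range N).sigma fun i => Finset.Icc ((k : ℤ) * i - n + 1) (m - 1) :=
  ((Equiv.prodComm ℤ ℕ).trans (Equiv.sigmaEquivProd ℕ ℤ).symm).subtypeEquiv fun q => by
    simpa [gap] using fun h_lower h_upper => snd_lt_of_mem_gap hk hN ⟨h_lower, h_upper⟩

lemma finite_gap (hk : 1 ≤ k) (m n : ℤ) : Finite (gap k m n) :=
  .of_equiv _ (gapEquiv hk (Int.self_le_toNat (m + n))).symm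

lemma card_gap (hk : 1 ≤ k) {N : ℕ} (hN : m + n ≤ N) :
    (Nat.card (gap k m n) : ℤ) = ∑ i ∈ Finset.range N, max 0 (m + n - 1 - (k : ℤ) * i) := by
  rw [Nat.card_congr (gapEquiv hk hN), Nat.card_eq_fintype_card, Fintype.card_coe,
    Finset.card_sigma, Nat.cast_sum]
  refine Finset.sum_congr rfl fun i _ => ?_
  rw [Int.card_Icc, Int.toNat_eq_max, max_comm]
  congr 1
  ring

end Gap

/-- The coefficients of a series at the exponents in the gap. -/
def gapCoeff (k : ℕ) (m n : ℤ) : Pz →ₗ[ℂ] (gap k m n → ℂ) :=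
  LinearMap.pi fun q => coeffP q.1.1 q.1.2

lemma gapCoeff_mon (k : ℕ) (m n : ℤ) [DecidableEq (gap k m n)] (q : gap k m n) :
    gapCoeff k m n (mon q.1.1 q.1.2) = Pi.single q 1 := by
  funext r
  simp only [gapCoeff, LinearMap.pi_apply, coeffP_mon, Pi.single_apply, Subtype.ext_iff]

lemma ker_gapCoeff (k : ℕ) (m n : ℤ) : LinearMap.ker (gapCoeff k m n) = coboundaries k m n := by
  ext f
  rw [mem_coboundaries, LinearMap.mem_ker, funext_iff, Subtype.forall]
  rfl

open scoped Classical in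
/-- The classes of the monomials in the gap, as a basis of the quotient by the coboundaries. -/
def monomialBasis (k : ℕ) (m n : ℤ) [Finite (gap k m n)] :
    Module.Basis (gap k m n) ℂ (Pz ⧸ coboundaries k m n) :=
  quotientBasis (gapCoeff_mon k m n) (ker_gapCoeff k m n)

lemma coe_monomialBasis (k : ℕ) (m n : ℤ) [Finite (gap k m n)] :
    ⇑(monomialBasis k m n) = fun q : gap k m n => Submodule.Quotient.mk (mon q.1.1 q.1.2) :=
  funext fun _ => quotientBasis_apply _ _ _

theorem statement3_general (k : ℕ) (hk : 1 ≤ k) (m n : ℤ) :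
    LinearIndependent ℂ
      (fun q : gap k m n => Submodule.Quotient.mk (p := coboundaries k m n) (mon q.1.1 q.1.2)) ∧
    Submodule.span ℂ
      (Set.range
        (fun q : gap k m n =>
          Submodule.Quotient.mk (p := coboundaries k m n) (mon q.1.1 q.1.2))) = ⊤ ∧
    FiniteDimensional ℂ (Pz ⧸ coboundaries k m n) ∧
    (∀ N : ℕ, m + n ≤ (N : ℤ) →
      (Module.finrank ℂ (Pz ⧸ coboundaries k m n) : ℤ) =
        ∑ i ∈ Finset.range N, max 0 (m + n - 1 - (k : ℤ) * i)) := by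
  have := finite_gap hk m n
  have h_mon := coe_monomialBasis k m n
  refine ⟨h_mon ▸ (monomialBasis k m n).linearIndependent, h_mon ▸ (monomialBasis k m n).span_eq,
    (monomialBasis k m n).finiteDimensional_of_finite, fun N hN => ?_⟩
  rw [Module.finrank_eq_nat_card_basis (monomialBasis k m n), card_gap hk hN]

/-- for `j ≥ 1`, in the quotient `P/(z^j·O_U^∞ + z^{−j}·O_V^∞)` the images of the
monomials `z^l u^i` with `i ≥ 0` and `k·i − j + 1 ≤ l ≤ j − 1` form a `ℂ`-basis; in particular
the quotient is finite dimensional, of dimension `Σ_{i ≥ 0} max(0, 2j − 1 − k·i)` (a finite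
sum: all terms with `k·i > 2j − 2` vanish, so the partial sums are eventually constant). -/
theorem statement3 (k : ℕ) (hk : 1 ≤ k) (j : ℤ) (hj : 1 ≤ j)
    (S : Submodule ℂ Pz)
    (hS : S = msmulP (mon j 0) OUinf ⊔ msmulP (mon (-j) 0) (OVinf k)) :
    LinearIndependent ℂ
      (fun q : {q : ℤ × ℕ // (k : ℤ) * q.2 - j + 1 ≤ q.1 ∧ q.1 ≤ j - 1} =>
        Submodule.Quotient.mk (p := S) (mon q.1.1 q.1.2)) ∧
    Submodule.span ℂ
      (Set.range
        (fun q : {q : ℤ × ℕ // (k : ℤ) * q.2 - j + 1 ≤ q.1 ∧ q.1 ≤ j - 1} =>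
          Submodule.Quotient.mk (p := S) (mon q.1.1 q.1.2))) = ⊤ ∧
    FiniteDimensional ℂ (Pz ⧸ S) ∧
    (∀ N : ℕ, 2 * j ≤ (N : ℤ) →
      (Module.finrank ℂ (Pz ⧸ S) : ℤ) =
        ∑ i ∈ Finset.range N, max 0 (2 * j - 1 - (k : ℤ) * i)) := by
  subst hS
  rw [two_mul]
  exact statement3_general k hk j j
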